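/- Fix ε > 0. For each n, let A_n be a random n×n integer matrix that is ε-balanced (with laws that may depend arbitrarily on n). Then lim_{n→∞} P(A_n : ℤ^n → ℤ^n is surjective) = 0. -/

import Mathlib

open MeasureTheory Filter

/-- A probability distribution on `ℤ` is `ε`-balanced if for every prime `p` it puts mass
at most `1 - ε` on every residue class modulo `p`. -/
def IsBalanced (ε : ℝ) (ν : Measure ℤ) : Prop :=
  ∀ p : ℕ, p.Prime → ∀ r : ZMod p, ν {x : ℤ | (x : ZMod p) = r} ≤ ENNReal.ofReal (1 - ε)

/-- The law of a random `n × m` integer matrix whose entries are independent with laws `ν i j`: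
the product measure on the space of matrices (viewed as functions `Fin n → Fin m → ℤ`). -/
noncomputable def matrixLaw {n m : ℕ} (ν : Fin n → Fin m → Measure ℤ) :
    Measure (Fin n → Fin m → ℤ) :=
  Measure.pi fun i => Measure.pi fun j => ν i j

/-!
Only the atoms of the entries matter: `A` is surjective iff `det A` is a unit, and the determinant
of a large random matrix with no heavy atoms avoids any given finite set of nonzero values.

Condition on all rows but the first. Then `det A = x ⬝ᵥ c`, where `x` is the first row and the
vector `c` of cofactors is orthogonal to all the other rows. If `c` has at least `k` nonzero
entries, then `x ⬝ᵥ c` is a sum of independent terms, `k` of which have no heavy atoms, hence is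
unlikely to hit a given value as `k → ∞`. Otherwise the other rows have a common nonzero orthogonal
vector supported on some `k` coordinates. For fixed coordinates and the space `K` of all such
vectors, `2 ^ dim K` starts at `2 ^ k`, and as long as `K ≠ 0` each further row halves it unless the
row is orthogonal to a chosen nonzero `v ∈ K`, which happens with probability bounded away from `1`.
So `K ≠ 0` has probability exponentially small in `n`, which beats the polynomial number of choices
of the coordinates.

The probability that a sum of independent variables lies in a set `T` of `m` values is compared with
that of a lazy random walk started at `m` not to hit `0`. Given its first term `a`, the rest of the
sum has to lie in `-a +ᵥ T`. For distinct `a` these translates are distinct by torsion-freeness, and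
moving an element from one translate to another one turns them into sets of `m - 1` and `m + 1`
elements.
-/

open Finset Matrix

open scoped Pointwise

section Integral

variable {α : Type*} [MeasurableSpace α] {μ : Measure α} [IsProbabilityMeasure μ] {f : α → ℝ}
  {b c : ℝ}

lemma integral_le_add_measureReal_mul {H : Set α} (hH : MeasurableSet H) (hf : ∀ a, 0 ≤ f a)
    (hfb : ∀ a, f a ≤ b + H.indicator (fun _ ↦ c) a) : ∫ a, f a ∂μ ≤ b + μ.real H * c := by
  have hH_int : Integrable (H.indicator fun _ ↦ c) μ := (integrable_const c).indicator hH
  calc ∫ a, f a ∂μ ≤ ∫ a, b + H.indicator (fun _ ↦ c) a ∂μ :=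
        integral_mono_of_nonneg (ae_of_all _ hf) ((integrable_const b).add hH_int) (ae_of_all _ hfb)
    _ = b + μ.real H * c := by
        rw [integral_add (integrable_const b) hH_int, integral_indicator_const _ hH,
          integral_const, probReal_univ, one_smul, smul_eq_mul]

lemma integral_le_of_forall_le (hf : ∀ a, 0 ≤ f a) (hfb : ∀ a, f a ≤ b) : ∫ a, f a ∂μ ≤ b := by
  simpa using integral_le_add_measureReal_mul (μ := μ) (c := 0) .empty hf (by simpa using hfb)

end Integral

section Product

variable {α : Type*} [MeasurableSpace α] {n : ℕ} (μ : Fin (n + 1) → Measure α)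

lemma measurePreserving_vecCons [∀ i, SigmaFinite (μ i)] :
    MeasurePreserving (fun p : α × (Fin n → α) ↦ vecCons p.1 p.2)
      ((μ 0).prod (Measure.pi fun i ↦ μ i.succ)) (Measure.pi μ) := by
  convert (measurePreserving_piFinSuccAbove μ 0).symm using 1
  · ext p : 1
    exact (Fin.insertNth_zero' p.1 p.2).symm
  · simp only [Fin.zero_succAbove]

variable [∀ i, IsFiniteMeasure (μ i)] {E : Set (Fin (n + 1) → α)}

lemma measureReal_pi_eq_integral_head (hE : MeasurableSet E) :
    (Measure.pi μ).real E =
      ∫ a, (Measure.pi fun i ↦ μ i.succ).real {y | vecCons a y ∈ E} ∂μ 0 := by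
  have hE' := (measurePreserving_vecCons μ).measurable hE
  rw [← (measurePreserving_vecCons μ).measureReal_preimage hE.nullMeasurableSet, Measure.real,
    Measure.prod_apply hE', ← integral_toReal (measurable_measure_prodMk_left hE').aemeasurable
      (ae_of_all _ fun _ ↦ measure_lt_top _ _)]
  rfl

lemma measureReal_pi_eq_integral_tail (hE : MeasurableSet E) :
    (Measure.pi μ).real E =
      ∫ y, (μ 0).real {a | vecCons a y ∈ E} ∂(Measure.pi fun i ↦ μ i.succ) := by
  have hE' := (measurePreserving_vecCons μ).measurable hE
  rw [← (measurePreserving_vecCons μ).measureReal_preimage hE.nullMeasurableSet, Measure.real,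
    Measure.prod_apply_symm hE', ← integral_toReal
      (measurable_measure_prodMk_right hE').aemeasurable (ae_of_all _ fun _ ↦ measure_lt_top _ _)]
  rfl

end Product

section SurvivalProb

/-- The probability that the lazy random walk on `ℕ` started at `m`, which moves by `+1` or `-1`
with probability `δ` each, has not hit `0` within its first `k` steps. It bounds the probability
that a sum of independent variables, `k` of which have atoms of mass at most `1 - δ`, falls into a
given set of `m` values. -/
noncomputable def survivalProb (δ : ℝ) : ℕ → ℕ → ℝ
  | _, 0 => 0
  | 0, _ + 1 => 1
  | k + 1, m + 1 =>
    (1 - 2 * δ) * survivalProb δ k (m + 1) + δ * (survivalProb δ k (m + 2) + survivalProb δ k m)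

variable {δ : ℝ}

lemma survivalProb_zero_right (k : ℕ) : survivalProb δ k 0 = 0 := by
  cases k <;> rfl

lemma survivalProb_mem_Icc (h₀ : 0 ≤ δ) (h₁ : δ ≤ 1 / 2) (k m : ℕ) :
    survivalProb δ k m ∈ Set.Icc 0 1 := by
  induction k generalizing m with
  | zero => cases m <;> simp [survivalProb]
  | succ k ih =>
    cases m with
    | zero => simp [survivalProb]
    | succ m =>
      obtain ⟨⟨ha₀, ha₁⟩, ⟨hb₀, hb₁⟩, ⟨hc₀, hc₁⟩⟩ :=
        (⟨ih (m + 1), ih (m + 2), ih m⟩ : _ ∧ _ ∧ _)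
      have hδ : 0 ≤ 1 - 2 * δ := by linarith
      rw [survivalProb]
      constructor
      · positivity
      · calc _ ≤ (1 - 2 * δ) * 1 + δ * (1 + 1) := by gcongr
          _ = 1 := by ring

lemma survivalProb_antitone (h₀ : 0 ≤ δ) (h₁ : δ ≤ 1 / 2) (m : ℕ) :
    Antitone (survivalProb δ · m) := by
  refine antitone_nat_of_succ_le fun k ↦ ?_
  induction k generalizing m with
  | zero =>
    cases m with
    | zero => rfl
    | succ m => exact (survivalProb_mem_Icc h₀ h₁ 1 (m + 1)).2
  | succ k ih =>
    cases m with
    | zero => rfl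
    | succ m =>
      have hδ : 0 ≤ 1 - 2 * δ := by linarith
      calc survivalProb δ (k + 2) (m + 1)
          = (1 - 2 * δ) * survivalProb δ (k + 1) (m + 1) +
              δ * (survivalProb δ (k + 1) (m + 2) + survivalProb δ (k + 1) m) := rfl
        _ ≤ (1 - 2 * δ) * survivalProb δ k (m + 1) +
              δ * (survivalProb δ k (m + 2) + survivalProb δ k m) := by
            gcongr <;> apply ih
        _ = survivalProb δ (k + 1) (m + 1) := rfl

lemma tendsto_survivalProb (h₀ : 0 < δ) (h₁ : δ ≤ 1 / 2) (m : ℕ) :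
    Tendsto (survivalProb δ · m) atTop (nhds 0) := by
  set u : ℕ → ℝ := fun m ↦ ⨅ k, survivalProb δ k m
  have hu (m : ℕ) : Tendsto (survivalProb δ · m) atTop (nhds (u m)) :=
    tendsto_atTop_ciInf (survivalProb_antitone h₀.le h₁ m)
      ⟨0, Set.forall_mem_range.2 fun k ↦ (survivalProb_mem_Icc h₀.le h₁ k m).1⟩
  have hu_mem (m : ℕ) : u m ∈ Set.Icc 0 1 :=
    isClosed_Icc.mem_of_tendsto (hu m) (.of_forall fun k ↦ survivalProb_mem_Icc h₀.le h₁ k m)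
  have hu_zero : u 0 = 0 := by simp [u, survivalProb_zero_right]
  have hu_harmonic (m : ℕ) : u (m + 2) = 2 * u (m + 1) - u m := by
    have hlim : Tendsto (fun k ↦ survivalProb δ (k + 1) (m + 1)) atTop
        (nhds ((1 - 2 * δ) * u (m + 1) + δ * (u (m + 2) + u m))) :=
      ((hu (m + 1)).const_mul _).add (((hu (m + 2)).add (hu m)).const_mul _)
    have hfix := tendsto_nhds_unique ((tendsto_add_atTop_iff_nat 1).2 (hu (m + 1))) hlim
    refine mul_left_cancel₀ h₀.ne' ?_
    linarith
  have hu_linear (m : ℕ) : u m = m * u 1 ∧ u (m + 1) = (m + 1) * u 1 := by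
    induction m with
    | zero => simp [hu_zero]
    | succ m ih =>
      refine ⟨mod_cast ih.2, ?_⟩
      rw [hu_harmonic, ih.1, ih.2]
      push_cast
      ring
  have hu_one : u 1 = 0 := by
    refine le_antisymm (not_lt.1 fun hpos ↦ ?_) (hu_mem 1).1
    obtain ⟨m, hm⟩ := exists_lt_nsmul hpos 1
    rw [nsmul_eq_mul, ← (hu_linear m).1] at hm
    exact hm.not_ge (hu_mem m).2
  simpa [(hu_linear m).1, hu_one] using hu m

end SurvivalProb

section Concentration

variable {δ : ℝ}

lemma integral_le_of_forall_add_le {α : Type*} [MeasurableSpace α] [MeasurableSingletonClass α]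
    (h₀ : 0 ≤ δ) (h₁ : δ ≤ 1 / 2) {μ : Measure α} [IsProbabilityMeasure μ]
    (hμ : ∀ a, μ.real {a} ≤ 1 - δ) {f : α → ℝ} {U W : ℝ} (hf : ∀ a, 0 ≤ f a)
    (hU : ∀ a, f a ≤ U) (hW : ∀ a b, a ≠ b → f a + f b ≤ W) :
    ∫ a, f a ∂μ ≤ (1 - 2 * δ) * U + δ * W := by
  have hδ : 0 ≤ 1 - 2 * δ := by linarith
  by_cases! hex : ∃ a, W / 2 < f a
  · obtain ⟨a, ha⟩ := hex
    have hle (b : α) : f b ≤ (W - f a) + Set.indicator {a} (fun _ ↦ 2 * f a - W) b := by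
      by_cases hb : b = a
      · simp only [hb, Set.mem_singleton_iff, Set.indicator_of_mem]
        linarith
      · simpa [hb] using le_sub_iff_add_le.2 (hW b a hb)
    calc ∫ b, f b ∂μ
        ≤ (W - f a) + μ.real {a} * (2 * f a - W) :=
          integral_le_add_measureReal_mul (measurableSet_singleton a) hf hle
      _ ≤ (W - f a) + (1 - δ) * (2 * f a - W) := by
          gcongr
          · linarith
          · exact hμ a
      _ = (1 - 2 * δ) * f a + δ * W := by ring
      _ ≤ (1 - 2 * δ) * U + δ * W := by
          gcongr
          exact hU a
  · have hIU : ∫ a, f a ∂μ ≤ U := integral_le_of_forall_le hf hU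
    have hIW : ∫ a, f a ∂μ ≤ W / 2 := integral_le_of_forall_le hf hex
    calc ∫ a, f a ∂μ = (1 - 2 * δ) * ∫ a, f a ∂μ + δ * (2 * ∫ a, f a ∂μ) := by ring
      _ ≤ (1 - 2 * δ) * U + δ * W := by
          gcongr
          linarith

lemma measureReal_add_le_of_card_eq {α : Type*} [MeasurableSpace α] [MeasurableSingletonClass α]
    {ρ : Measure α} [IsFiniteMeasure ρ] {g : ℕ → ℝ} (hρ : ∀ S : Finset α, ρ.real S ≤ g #S)
    {A B : Finset α} (hcard : #A = #B) (hne : A ≠ B) :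
    ρ.real A + ρ.real B ≤ g (#B + 1) + g (#B - 1) := by
  classical
  obtain ⟨x, hxA, hxB⟩ : ∃ x ∈ A, x ∉ B :=
    not_subset.1 fun hsub ↦ hne (eq_of_subset_of_card_le hsub hcard.ge)
  calc ρ.real A + ρ.real B = (ρ.real {x} + ρ.real B) + ρ.real (A.erase x : Finset α) := by
        nth_rw 1 [← insert_erase hxA]
        rw [coe_insert, Set.insert_eq, measureReal_union (by simp) (Finset.measurableSet _)]
        ring
    _ = ρ.real (insert x B : Finset α) + ρ.real (A.erase x : Finset α) := by
        rw [coe_insert, Set.insert_eq, measureReal_union (by simpa) B.measurableSet]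
    _ ≤ g (#B + 1) + g (#B - 1) := by
        rw [← card_insert_of_notMem hxB, ← hcard, ← card_erase_of_mem hxA]
        exact add_le_add (hρ _) (hρ _)

section Group

variable {G : Type*} [AddCommGroup G] [IsAddTorsionFree G]

lemma vadd_finset_left_injective [DecidableEq G] {T : Finset G} (hT : T.Nonempty) :
    Function.Injective fun a : G ↦ a +ᵥ T := by
  intro a b hab
  have sum_vadd (a : G) : ∑ x ∈ a +ᵥ T, x = #T • a + ∑ x ∈ T, x := by
    rw [vadd_finset_def, sum_image fun x _ y _ ↦ (vadd_left_cancel_iff a).1]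
    exact (sum_add_distrib ..).trans (congrArg (· + _) (sum_const a))
  refine nsmul_right_injective hT.card_ne_zero (add_right_cancel (b := ∑ x ∈ T, x) ?_)
  simp only [← sum_vadd]
  exact congrArg (fun S ↦ ∑ x ∈ S, x) hab

variable [MeasurableSpace G] [MeasurableSingletonClass G]

lemma integral_measureReal_vadd_le [DecidableEq G] (h₀ : 0 ≤ δ) (h₁ : δ ≤ 1 / 2)
    {μ ρ : Measure G} [IsProbabilityMeasure μ] [IsFiniteMeasure ρ] (hμ : ∀ a, μ.real {a} ≤ 1 - δ)
    {k : ℕ} (hρ : ∀ S : Finset G, ρ.real S ≤ survivalProb δ k #S) (T : Finset G) :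
    ∫ a, ρ.real (-a +ᵥ T : Finset G) ∂μ ≤ survivalProb δ (k + 1) #T := by
  obtain rfl | hT := T.eq_empty_or_nonempty
  · simp [survivalProb]
  obtain ⟨m, hm⟩ := Nat.exists_eq_add_one.2 hT.card_pos
  rw [hm, survivalProb]
  refine integral_le_of_forall_add_le h₀ h₁ hμ (fun _ ↦ measureReal_nonneg) (fun a ↦ ?_)
    fun a b hab ↦ ?_
  · simpa [hm] using hρ (-a +ᵥ T)
  · have hne : -a +ᵥ T ≠ -b +ᵥ T := fun h ↦ hab (neg_injective (vadd_finset_left_injective hT h))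
    simpa [hm] using measureReal_add_le_of_card_eq hρ (by simp) hne

open Classical in
theorem measureReal_sum_mem_le [Countable G] (h₀ : 0 ≤ δ) (h₁ : δ ≤ 1 / 2) {n : ℕ}
    (μ : Fin n → Measure G) [∀ i, IsProbabilityMeasure (μ i)] (T : Finset G) :
    (Measure.pi μ).real {x | ∑ i, x i ∈ T} ≤
      survivalProb δ #{i | ∀ a, (μ i).real {a} ≤ 1 - δ} #T := by
  induction n generalizing T with
  | zero =>
    obtain rfl | hT := T.eq_empty_or_nonempty
    · simp [survivalProb]
    · obtain ⟨m, hm⟩ := Nat.exists_eq_add_one.2 hT.card_pos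
      simp [hm, survivalProb]
  | succ n ih =>
    set k := #{i : Fin n | ∀ a, (μ i.succ).real {a} ≤ 1 - δ}
    set ρ : Measure G := (Measure.pi fun i : Fin n ↦ μ i.succ).map fun y ↦ ∑ i, y i
    have : IsProbabilityMeasure ρ := Measure.isProbabilityMeasure_map (by fun_prop)
    have hρ (S : Finset G) : ρ.real S ≤ survivalProb δ k #S := by
      rw [map_measureReal_apply .of_discrete S.measurableSet]
      exact ih (fun i ↦ μ i.succ) S
    have hsplit : (Measure.pi μ).real {x | ∑ i, x i ∈ T} =
        ∫ a, ρ.real (-a +ᵥ T : Finset G) ∂μ 0 := by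
      rw [measureReal_pi_eq_integral_head μ .of_discrete]
      refine integral_congr_ae (ae_of_all _ fun a ↦ ?_)
      dsimp only
      rw [map_measureReal_apply .of_discrete (Finset.measurableSet _)]
      congr 1
      ext y
      simp [Fin.sum_univ_succ, Set.mem_neg_vadd_set_iff]
    rw [hsplit, Fin.card_filter_univ_succ]
    split_ifs with hspread
    · exact integral_measureReal_vadd_le h₀ h₁ hspread hρ T
    · exact integral_le_of_forall_le (fun _ ↦ measureReal_nonneg)
        fun a ↦ by simpa using hρ (-a +ᵥ T)

end Group

end Concentration

section SparseKernel

variable {R : Type*} [CommRing R]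

lemma exists_mem_of_vecCons_mulVec_eq_zero_iff {n N : ℕ} {W : Submodule R (Fin n → R)}
    {x : Fin n → R} {Y : Fin N → Fin n → R} :
    (∃ v ∈ W, v ≠ 0 ∧ of (vecCons x Y) *ᵥ v = 0) ↔
      ∃ v ∈ W ⊓ (dotProductEquiv R _ x).ker, v ≠ 0 ∧ of Y *ᵥ v = 0 := by
  have hker (v : Fin n → R) :
      of (vecCons x Y) *ᵥ v = 0 ↔ v ∈ (dotProductEquiv R _ x).ker ∧ of Y *ᵥ v = 0 := by
    rw [cons_mulVec, cons_eq_zero_iff]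
    rfl
  simp only [hker, Submodule.mem_inf]
  grind

variable [IsDomain R]

lemma rank_inf_ker_add_one_le {M : Type*} [AddCommGroup M] [Module R M] {W : Submodule R M}
    {f : M →ₗ[R] R} {v : M} (hv : v ∈ W) (hfv : f v ≠ 0) :
    Module.rank R ↥(W ⊓ f.ker) + 1 ≤ Module.rank R W := by
  have hker : Module.rank R (f.domRestrict W).ker = Module.rank R ↥(W ⊓ f.ker) := by
    rw [LinearMap.ker_domRestrict, ← Submodule.map_comap_subtype]
    exact (Submodule.equivMapOfInjective _ W.subtype_injective _).rank_eq
  have hrange : 1 ≤ Module.rank R (f.domRestrict W).range := by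
    rw [Cardinal.one_le_iff_ne_zero, Ne, Submodule.rank_eq_zero, LinearMap.range_eq_bot]
    exact fun h ↦ hfv (LinearMap.congr_fun h ⟨v, hv⟩)
  refine Cardinal.lift_le.1
    (le_of_le_of_eq ?_ (LinearMap.lift_rank_range_add_rank_ker (f.domRestrict W)))
  rw [Cardinal.lift_add, Cardinal.lift_one, add_comm, hker]
  gcongr
  exact Cardinal.one_le_lift_iff.2 hrange

lemma exists_rank_le_forall_mem {n : ℕ} (s : Finset (Fin n)) :
    ∃ W : Submodule R (Fin n → R), Module.rank R W ≤ #s ∧ ∀ v, (∀ j ∉ s, v j = 0) → v ∈ W := by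
  classical
  refine ⟨Submodule.span R (s.image fun j ↦ Pi.single j (1 : R)),
    (rank_span_finset_le _).trans (mod_cast card_image_le), fun v hv ↦ ?_⟩
  rw [pi_eq_sum_univ' v]
  refine Submodule.sum_mem _ fun j _ ↦ ?_
  by_cases hj : j ∈ s
  · exact Submodule.smul_mem _ _ (Submodule.subset_span (mem_image_of_mem _ hj))
  · simp [hv j hj]

variable [Countable R] [MeasurableSpace R] [MeasurableSingletonClass R] {n : ℕ}

lemma measureReal_exists_mem_mulVec_eq_zero_le {q : ℝ} (hq : 0 ≤ q) {N : ℕ}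
    (μ : Fin N → Measure (Fin n → R)) [∀ i, IsProbabilityMeasure (μ i)]
    (hμ : ∀ i v, v ≠ 0 → (μ i).real {x | x ⬝ᵥ v = 0} ≤ q)
    {W : Submodule R (Fin n → R)} {d : ℕ} (hW : Module.rank R W ≤ d) :
    (Measure.pi μ).real {Y | ∃ v ∈ W, v ≠ 0 ∧ of Y *ᵥ v = 0} ≤ 2 ^ d * ((1 + q) / 2) ^ N := by
  induction N generalizing W d with
  | zero =>
    rw [pow_zero, mul_one]
    exact measureReal_le_one.trans (one_le_pow₀ one_le_two)
  | succ N ih =>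
    obtain rfl | hbot := eq_or_ne W ⊥
    · have hempty : {Y : Fin (N + 1) → Fin n → R |
          ∃ v ∈ (⊥ : Submodule R (Fin n → R)), v ≠ 0 ∧ of Y *ᵥ v = 0} = ∅ := by
        grind [Submodule.mem_bot]
      rw [hempty, measureReal_empty]
      positivity
    obtain ⟨v, hvW, hv⟩ := W.exists_mem_ne_zero_of_ne_bot hbot
    obtain ⟨d, rfl⟩ : ∃ d', d = d' + 1 := by
      refine Nat.exists_eq_succ_of_ne_zero ?_
      rintro rfl
      exact hbot (Submodule.rank_eq_zero.1 (by simpa using hW))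
    set H : Set (Fin n → R) := {x | x ⬝ᵥ v = 0}
    set C : ℝ := 2 ^ d * ((1 + q) / 2) ^ N
    -- A row outside `H` lowers the rank of `W` by one, which halves the factor `2 ^ d`.
    have hrow (x : Fin n → R) :
        (Measure.pi fun i : Fin N ↦ μ i.succ).real
          {Y | ∃ w ∈ W, w ≠ 0 ∧ of (vecCons x Y) *ᵥ w = 0} ≤ C + H.indicator (fun _ ↦ C) x := by
      simp only [exists_mem_of_vecCons_mulVec_eq_zero_iff]
      by_cases hx : x ∈ H
      · refine (ih _ (fun i ↦ hμ _) ((Submodule.rank_mono inf_le_left).trans hW)).trans_eq ?_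
        rw [Set.indicator_of_mem hx]
        ring
      · have hrank := (rank_inf_ker_add_one_le hvW (f := dotProductEquiv R _ x) hx).trans hW
        rw [Nat.cast_add, Nat.cast_one, Cardinal.add_one_le_add_one_iff] at hrank
        simpa [hx] using ih _ (fun i ↦ hμ _) hrank
    rw [measureReal_pi_eq_integral_head μ .of_discrete]
    calc _ ≤ C + (μ 0).real H * C :=
          integral_le_add_measureReal_mul .of_discrete (fun _ ↦ measureReal_nonneg) hrow
      _ ≤ C + q * C := by
          gcongr
          exact hμ 0 v hv
      _ = 2 ^ (d + 1) * ((1 + q) / 2) ^ (N + 1) := by ring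

theorem measureReal_exists_sparse_mulVec_eq_zero_le [DecidableEq R] {q : ℝ} (hq : 0 ≤ q) {N k : ℕ}
    (hk : k ≤ n) (μ : Fin N → Measure (Fin n → R)) [∀ i, IsProbabilityMeasure (μ i)]
    (hμ : ∀ i v, v ≠ 0 → (μ i).real {x | x ⬝ᵥ v = 0} ≤ q) :
    (Measure.pi μ).real {Y | ∃ v, hammingNorm v ≤ k ∧ v ≠ 0 ∧ of Y *ᵥ v = 0} ≤
      (2 * n) ^ k * ((1 + q) / 2) ^ N := by
  choose W hrank hmem using exists_rank_le_forall_mem (R := R) (n := n)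
  calc _ ≤ (Measure.pi μ).real (⋃ s ∈ powersetCard k (univ : Finset (Fin n)),
          {Y | ∃ v ∈ W s, v ≠ 0 ∧ of Y *ᵥ v = 0}) := by
        refine measureReal_mono ?_ (measure_ne_top _ _)
        rintro Y ⟨v, hvk, hv, hYv⟩
        obtain ⟨s, hs, rfl⟩ := exists_superset_card_eq hvk (by simpa using hk)
        have hvs : v ∈ W s := hmem s v fun j hj ↦ by simpa using mt (@hs j) hj
        exact Set.mem_biUnion (mem_powersetCard_univ.2 rfl) ⟨v, hvs, hv, hYv⟩
    _ ≤ ∑ s ∈ powersetCard k (univ : Finset (Fin n)),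
          (Measure.pi μ).real {Y | ∃ v ∈ W s, v ≠ 0 ∧ of Y *ᵥ v = 0} :=
        measureReal_biUnion_finset_le _ _
    _ ≤ ∑ _s ∈ powersetCard k (univ : Finset (Fin n)), 2 ^ k * ((1 + q) / 2) ^ N := by
        refine sum_le_sum fun s hs ↦ ?_
        rw [mem_powersetCard_univ] at hs
        exact measureReal_exists_mem_mulVec_eq_zero_le hq μ hμ (hs ▸ hrank s)
    _ = n.choose k * (2 ^ k * ((1 + q) / 2) ^ N) := by simp
    _ ≤ n ^ k * (2 ^ k * ((1 + q) / 2) ^ N) := by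
        gcongr
        exact_mod_cast Nat.choose_le_pow n k
    _ = (2 * n) ^ k * ((1 + q) / 2) ^ N := by ring

end SparseKernel

section Determinant

variable {R : Type*} [CommRing R]

lemma exists_forall_det_vecCons_eq_dotProduct {N : ℕ} (Y : Fin N → Fin (N + 1) → R) :
    ∃ c, of Y *ᵥ c = 0 ∧ ∀ x, (of (vecCons x Y)).det = x ⬝ᵥ c := by
  obtain ⟨c, hc⟩ := (dotProductEquiv R (Fin (N + 1))).surjective
    ((detRowAlternating (R := R)).toMultilinearMap.toLinearMap (vecCons 0 Y) 0)
  have hdet (x : Fin (N + 1) → R) : (of (vecCons x Y)).det = x ⬝ᵥ c := by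
    rw [dotProduct_comm, ← dotProductEquiv_apply_apply, hc]
    rw [vecCons, vecCons, MultilinearMap.toLinearMap_apply, Fin.update_cons_zero]
    rfl
  refine ⟨c, ?_, hdet⟩
  ext i
  exact (hdet (Y i)).symm.trans (det_zero_of_row_eq (Fin.succ_ne_zero i).symm rfl)

lemma surjective_mulVecLin_iff_isUnit_det {n : Type*} [Fintype n] [DecidableEq n]
    (A : Matrix n n R) : Function.Surjective A.mulVecLin ↔ IsUnit A.det := by
  rw [coe_mulVecLin, mulVec_surjective_iff_isUnit, isUnit_iff_isUnit_det]

variable [IsDomain R] [CharZero R] [Countable R] [MeasurableSpace R] [MeasurableSingletonClass R]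
  {δ : ℝ}

lemma measureReal_dotProduct_mem_le [DecidableEq R] (h₀ : 0 ≤ δ) (h₁ : δ ≤ 1 / 2) {n k : ℕ}
    (μ : Fin n → Measure R) [∀ i, IsProbabilityMeasure (μ i)] (hμ : ∀ i a, (μ i).real {a} ≤ 1 - δ)
    {c : Fin n → R} (hc : k ≤ hammingNorm c) (T : Finset R) :
    (Measure.pi μ).real {x | x ⬝ᵥ c ∈ T} ≤ survivalProb δ k #T := by
  set ν : Fin n → Measure R := fun i ↦ (μ i).map (· * c i)
  have (i : Fin n) : IsProbabilityMeasure (ν i) :=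
    Measure.isProbabilityMeasure_map Measurable.of_discrete.aemeasurable
  have hν (i : Fin n) (hi : c i ≠ 0) (a : R) : (ν i).real {a} ≤ 1 - δ := by
    rw [map_measureReal_apply .of_discrete (measurableSet_singleton a)]
    obtain h | ⟨b, h⟩ :=
      (Set.subsingleton_singleton.preimage (mul_left_injective₀ hi) :
        ((· * c i) ⁻¹' {a}).Subsingleton).eq_empty_or_singleton
    · rw [h, measureReal_empty]
      linarith
    · rw [h]
      exact hμ i b
  calc (Measure.pi μ).real {x | x ⬝ᵥ c ∈ T}
      = (Measure.pi ν).real {y | ∑ i, y i ∈ T} := by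
        rw [← Measure.pi_map_pi fun i ↦ Measurable.of_discrete.aemeasurable,
          map_measureReal_apply .of_discrete .of_discrete]
        rfl
    _ ≤ survivalProb δ _ #T := measureReal_sum_mem_le h₀ h₁ ν T
    _ ≤ survivalProb δ k #T := by
        refine survivalProb_antitone h₀ h₁ _ (hc.trans (card_le_card fun i hi ↦ ?_))
        simpa using hν i (by simpa using hi)

theorem measureReal_det_mem_le (h₀ : 0 ≤ δ) (h₁ : δ ≤ 1 / 2) {N k : ℕ} (hk : k ≤ N + 1)
    (ν : Fin (N + 1) → Fin (N + 1) → Measure R) [∀ i j, IsProbabilityMeasure (ν i j)]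
    (hν : ∀ i j a, (ν i j).real {a} ≤ 1 - δ) {T : Finset R} (hT : 0 ∉ T) :
    (Measure.pi fun i ↦ Measure.pi (ν i)).real {A | (of A).det ∈ T} ≤
      (2 * (N + 1 : ℕ)) ^ k * (1 - δ / 2) ^ N + survivalProb δ k #T := by
  classical
  set B : Set (Fin N → Fin (N + 1) → R) := {Y | ∃ v, hammingNorm v ≤ k ∧ v ≠ 0 ∧ of Y *ᵥ v = 0}
  set ρ := Measure.pi fun i : Fin N ↦ Measure.pi (ν i.succ)
  have hrow (i : Fin N) (v : Fin (N + 1) → R) (hv : v ≠ 0) :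
      (Measure.pi (ν i.succ)).real {x | x ⬝ᵥ v = 0} ≤ 1 - δ := by
    calc _ ≤ survivalProb δ 1 1 := by
          simpa using measureReal_dotProduct_mem_le h₀ h₁ _ (hν i.succ)
            (hammingNorm_pos_iff.2 hv) {0}
      _ = 1 - δ := by
        simp only [survivalProb]
        ring
  have hB : ρ.real B ≤ (2 * (N + 1 : ℕ)) ^ k * (1 - δ / 2) ^ N := by
    convert measureReal_exists_sparse_mulVec_eq_zero_le (by linarith) hk _ hrow using 3
    ring
  have hfirst (Y : Fin N → Fin (N + 1) → R) :
      (Measure.pi (ν 0)).real {x | (of (vecCons x Y)).det ∈ T} ≤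
        survivalProb δ k #T + B.indicator (fun _ ↦ 1) Y := by
    obtain ⟨c, hYc, hdet⟩ := exists_forall_det_vecCons_eq_dotProduct Y
    simp only [hdet]
    have hs := (survivalProb_mem_Icc h₀ h₁ k #T).1
    by_cases hc : k ≤ hammingNorm c
    · exact (measureReal_dotProduct_mem_le h₀ h₁ _ (hν 0) hc T).trans
        (le_add_of_nonneg_right (Set.indicator_nonneg (by simp) _))
    obtain rfl | hc' := eq_or_ne c 0
    · simpa [hT] using add_nonneg hs (Set.indicator_nonneg (by simp) _)
    · have hY : Y ∈ B := ⟨c, by omega, hc', hYc⟩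
      rw [Set.indicator_of_mem hY]
      exact measureReal_le_one.trans (le_add_of_nonneg_left hs)
  rw [measureReal_pi_eq_integral_tail _ .of_discrete]
  calc _ ≤ survivalProb δ k #T + ρ.real B * 1 :=
        integral_le_add_measureReal_mul .of_discrete (fun _ ↦ measureReal_nonneg) hfirst
    _ ≤ _ := by linarith

lemma tendsto_two_mul_pow_mul_pow {r : ℝ} (h₀ : 0 < r) (h₁ : r < 1) (k : ℕ) :
    Tendsto (fun N : ℕ ↦ (2 * (N + 1 : ℕ)) ^ k * r ^ N) atTop (nhds 0) := by
  have hlim := ((tendsto_pow_const_mul_const_pow_of_lt_one k h₀.le h₁).comp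
    (tendsto_add_atTop_nat 1)).const_mul (2 ^ k / r)
  rw [mul_zero] at hlim
  refine hlim.congr fun N ↦ ?_
  simp only [Function.comp_apply]
  field_simp
  ring

theorem tendsto_measureReal_det_mem {ε : ℝ} (hε : 0 < ε) (ν : (n : ℕ) → Fin n → Fin n → Measure R)
    [∀ n i j, IsProbabilityMeasure (ν n i j)]
    (hν : ∀ n i j a, ν n i j {a} ≤ ENNReal.ofReal (1 - ε)) {T : Finset R} (hT : 0 ∉ T) :
    Tendsto (fun n ↦ (Measure.pi fun i ↦ Measure.pi (ν n i)).real {A | (of A).det ∈ T}) atTop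
      (nhds 0) := by
  set δ := min ε (1 / 2)
  have h₀ : 0 < δ := by positivity
  have h₁ : δ ≤ 1 / 2 := min_le_right _ _
  have hatom n i j a : (ν n i j).real {a} ≤ 1 - δ :=
    ENNReal.toReal_le_of_le_ofReal (by linarith)
      ((hν n i j a).trans (ENNReal.ofReal_le_ofReal (by gcongr; exact min_le_left _ _)))
  rw [← tendsto_add_atTop_iff_nat 1]
  refine (tendsto_order.2 ⟨fun a ha ↦ .of_forall fun _ ↦ ha.trans_le measureReal_nonneg,
    fun η hη ↦ ?_⟩)
  obtain ⟨k, hk⟩ := ((tendsto_survivalProb h₀ h₁ #T).eventually_lt_const hη).exists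
  have hlim : Tendsto (fun N : ℕ ↦ (2 * (N + 1 : ℕ)) ^ k * (1 - δ / 2) ^ N + survivalProb δ k #T)
      atTop (nhds (survivalProb δ k #T)) := by
    simpa using (tendsto_two_mul_pow_mul_pow (by linarith) (by linarith) k).add_const _
  filter_upwards [hlim.eventually_lt_const hk, eventually_ge_atTop k] with N hN hkN
  exact (measureReal_det_mem_le h₀.le h₁ (by omega) _ (hatom _) hT).trans_lt hN

theorem stmt2_general [Finite Rˣ] {ε : ℝ} (hε : 0 < ε) (ν : (n : ℕ) → Fin n → Fin n → Measure R)
    (hprob : ∀ n i j, IsProbabilityMeasure (ν n i j))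
    (hatom : ∀ n i j a, ν n i j {a} ≤ ENNReal.ofReal (1 - ε)) :
    Tendsto (fun n : ℕ ↦ (Measure.pi fun i ↦ Measure.pi fun j ↦ ν n i j).real
      {A | Function.Surjective (of A).mulVecLin}) atTop (nhds 0) := by
  classical
  have := Fintype.ofFinite Rˣ
  have hunit (a : R) : a ∈ univ.image ((↑) : Rˣ → R) ↔ IsUnit a := by simp [IsUnit]
  simp only [surjective_mulVecLin_iff_isUnit_det, ← hunit]
  exact tendsto_measureReal_det_mem hε ν hatom (by simp)

end Determinant

lemma IsBalanced.measure_singleton_le {ε : ℝ} {μ : Measure ℤ} (h : IsBalanced ε μ) (a : ℤ) :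
    μ {a} ≤ ENNReal.ofReal (1 - ε) :=
  (measure_mono fun _ hx ↦ congrArg _ (Set.mem_singleton_iff.1 hx)).trans (h 2 Nat.prime_two a)

theorem stmt2 (ε : ℝ) (hε : 0 < ε)
    (ν : (n : ℕ) → Fin n → Fin n → Measure ℤ)
    (hprob : ∀ n i j, IsProbabilityMeasure (ν n i j))
    (hbal : ∀ n i j, IsBalanced ε (ν n i j)) :
    Tendsto (fun n : ℕ =>
        ((matrixLaw (ν n)) {A | Function.Surjective (Matrix.of A).mulVecLin}).toReal) atTop
      (nhds 0) := by
  exact stmt2_general hε ν hprob fun n i j ↦ (hbal n i j).measure_singleton_le
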